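/- arXiv:1607.08463 — 2 statements merged into one kernel-verified Lean document; each statement's English description precedes it below -/
import Mathlib

section
/- For every pair of points p, q ∈ ℝ², the infimum d̄_F(p,q) := inf{ E(γ) : γ : [a,b] → ℝ² locally Lipschitz, γ(a) = p, γ(b) = q } is attained, i.e. there exists a (not necessarily unique) locally Lipschitz curve γ joining p to q with E(γ) = d̄_F(p,q). -/
open MeasureTheory Set Filter Topology
open scoped ENNReal

noncomputable section

/-- The Euclidean norm of a vector in `ℝ × ℝ`. -/
def enorm2 (v : ℝ × ℝ) : ℝ := Real.sqrt (v.1 ^ 2 + v.2 ^ 2)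

/-- The degenerate length `E(γ) = ∫ₐᵇ F(γ(t)) |γ'(t)| dt` of a planar curve. -/
def degLen (F : ℝ × ℝ → ℝ) (a b : ℝ) (γ : ℝ → ℝ × ℝ) : ℝ :=
  ∫ t in a..b, F (γ t) * enorm2 (deriv γ t)

/-- The signed area `𝒜(γ) = ∫ₐᵇ γ¹(t) (γ²)'(t) dt` of a planar curve. -/
def sArea (a b : ℝ) (γ : ℝ → ℝ × ℝ) : ℝ :=
  ∫ t in a..b, (γ t).1 * deriv (fun s => (γ s).2) t

/-- A locally Lipschitz curve on `[a,b]` joining `p` to `q`. -/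
def IsCurve (a b : ℝ) (γ : ℝ → ℝ × ℝ) (p q : ℝ × ℝ) : Prop :=
  a ≤ b ∧ LocallyLipschitz γ ∧ γ a = p ∧ γ b = q

/-- The standing hypotheses on the potential `W`: smooth, nonnegative, vanishing exactly at the
two distinct wells `pm` and `pp`, with positive definite Hessians there, and bounded away from
zero near infinity (`liminf_{|p|→∞} W(p) > 0`). -/
structure TwoWell (W : ℝ × ℝ → ℝ) (pm pp : ℝ × ℝ) : Prop where
  smooth : ContDiff ℝ (⊤ : ℕ∞) W
  nonneg : ∀ p, 0 ≤ W p
  wells_ne : pm ≠ pp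
  zeroSet : ∀ p, W p = 0 ↔ p = pm ∨ p = pp
  hess_m : ∀ v : ℝ × ℝ, v ≠ 0 → 0 < iteratedFDeriv ℝ 2 W pm ![v, v]
  hess_p : ∀ v : ℝ × ℝ, v ≠ 0 → 0 < iteratedFDeriv ℝ 2 W pp ![v, v]
  coercive : ∃ c > 0, ∃ R : ℝ, ∀ p : ℝ × ℝ, R ≤ ‖p‖ → c ≤ W p


lemma enorm2_nonneg (v : ℝ × ℝ) : 0 ≤ enorm2 v := Real.sqrt_nonneg _

lemma continuous_enorm2 : Continuous enorm2 := by
  unfold enorm2; fun_prop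

lemma norm_le_enorm2 (v : ℝ × ℝ) : ‖v‖ ≤ enorm2 v := by
  unfold enorm2
  rw [Prod.norm_def]
  apply max_le
  · rw [Real.norm_eq_abs]; apply Real.abs_le_sqrt; nlinarith [sq_nonneg v.2]
  · rw [Real.norm_eq_abs]; apply Real.abs_le_sqrt; nlinarith [sq_nonneg v.1]

lemma enorm2_le (v : ℝ × ℝ) : enorm2 v ≤ 2 * ‖v‖ := by
  unfold enorm2
  have h1 : |v.1| ≤ ‖v‖ := by have := norm_fst_le v; rwa [Real.norm_eq_abs] at this
  have h2 : |v.2| ≤ ‖v‖ := by have := norm_snd_le v; rwa [Real.norm_eq_abs] at this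
  have h3 := norm_nonneg v
  apply Real.sqrt_le_iff.2 ⟨by positivity, ?_⟩
  rw [← sq_abs v.1, ← sq_abs v.2]
  nlinarith [abs_nonneg v.1, abs_nonneg v.2]

lemma enorm2_smul (r : ℝ) (v : ℝ × ℝ) : enorm2 (r • v) = |r| * enorm2 v := by
  unfold enorm2
  rw [← Real.sqrt_sq_eq_abs, ← Real.sqrt_mul (sq_nonneg r)]
  congr 1
  simp only [Prod.smul_fst, Prod.smul_snd, smul_eq_mul]
  ring

lemma inner_le_enorm2 (u v : ℝ × ℝ) : u.1 * v.1 + u.2 * v.2 ≤ enorm2 u * enorm2 v := by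
  unfold enorm2
  rw [← Real.sqrt_mul (by positivity)]
  apply Real.le_sqrt_of_sq_le
  nlinarith [sq_nonneg (u.1 * v.2 - u.2 * v.1)]

lemma enorm2_sq (u : ℝ × ℝ) : enorm2 u * enorm2 u = u.1 * u.1 + u.2 * u.2 := by
  unfold enorm2
  rw [Real.mul_self_sqrt (by positivity)]; ring

lemma loclip_lipOn {γ : ℝ → ℝ × ℝ} (hγ : LocallyLipschitz γ) (u v : ℝ) :
    ∃ K, LipschitzOnWith K γ (Icc u v) :=
  hγ.locallyLipschitzOn.exists_lipschitzOnWith_of_compact isCompact_Icc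

lemma deriv_bound {γ : ℝ → ℝ × ℝ} (hγ : LocallyLipschitz γ) (u v : ℝ) :
    ∃ K : ℝ, ∀ t ∈ Icc u v, ‖deriv γ t‖ ≤ K := by
  obtain ⟨K, hK⟩ := loclip_lipOn hγ (u - 1) (v + 1)
  refine ⟨K, fun t ht => norm_deriv_le_of_lipschitzOn (s := Icc (u-1) (v+1)) ?_ hK⟩
  exact Icc_mem_nhds (by linarith [ht.1]) (by linarith [ht.2])

lemma ii_energy {G : ℝ × ℝ → ℝ} (hG : Continuous G) {γ : ℝ → ℝ × ℝ} (hγ : LocallyLipschitz γ)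
    (u v : ℝ) : IntervalIntegrable (fun t => G (γ t) * enorm2 (deriv γ t)) volume u v := by
  have hc : ContinuousOn (fun t => G (γ t)) (uIcc u v) := (hG.comp hγ.continuous).continuousOn
  apply IntervalIntegrable.continuousOn_mul _ hc
  obtain ⟨K, hK⟩ := deriv_bound hγ (min u v) (max u v)
  refine (intervalIntegrable_const (c := 2 * K)).mono_fun ?_ ?_
  · exact (continuous_enorm2.measurable.comp (measurable_deriv γ)).aestronglyMeasurable
  · refine (ae_restrict_iff' measurableSet_uIoc).2 (Eventually.of_forall fun t ht => ?_)
    have := hK t (uIoc_subset_uIcc ht)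
    simp only [Real.norm_eq_abs]
    rw [abs_of_nonneg (enorm2_nonneg _)]
    refine le_trans ?_ (le_abs_self _)
    linarith [enorm2_le (deriv γ t)]

lemma ii_speed {γ : ℝ → ℝ × ℝ} (hγ : LocallyLipschitz γ)
    (u v : ℝ) : IntervalIntegrable (fun t => enorm2 (deriv γ t)) volume u v := by
  simpa using ii_energy (G := fun _ => 1) continuous_const hγ u v

lemma loclip_ae_diff {γ : ℝ → ℝ × ℝ} (hγ : LocallyLipschitz γ) (u v : ℝ) :
    ∀ᵐ t, t ∈ Ioo u v → DifferentiableAt ℝ γ t := by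
  obtain ⟨K, hK⟩ := loclip_lipOn hγ u v
  filter_upwards [hK.ae_differentiableWithinAt_of_mem_real] with t ht h
  exact (ht ⟨h.1.le, h.2.le⟩).differentiableAt (Icc_mem_nhds h.1 h.2)

lemma ftc_ineq {γ : ℝ → ℝ × ℝ} (hγ : LocallyLipschitz γ) {u v : ℝ} (huv : u ≤ v) :
    enorm2 (γ v - γ u) ≤ ∫ t in u..v, enorm2 (deriv γ t) := by
  set D := γ v - γ u with hD
  obtain ⟨K, hK⟩ := loclip_lipOn hγ u v
  set φ : ℝ → ℝ := fun t => D.1 * (γ t).1 + D.2 * (γ t).2 with hφ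
  have hL : LocallyLipschitz φ := by
    have h1 : ContDiff ℝ 1 (fun x : ℝ × ℝ => D.1 * x.1 + D.2 * x.2) := by fun_prop
    exact h1.locallyLipschitz.comp hγ
  obtain ⟨K', hK'⟩ := hL.locallyLipschitzOn.exists_lipschitzOnWith_of_compact (s := uIcc u v) isCompact_uIcc
  have hac := hK'.absolutelyContinuousOnInterval
  have h1 := hac.integral_deriv_eq_sub
  have h2 : φ v - φ u = enorm2 D * enorm2 D := by
    rw [enorm2_sq, hφ, hD]; simp only [Prod.fst_sub, Prod.snd_sub]; ring
  have h3 : ∫ t in u..v, deriv φ t ≤ ∫ t in u..v, enorm2 D * enorm2 (deriv γ t) := by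
    apply intervalIntegral.integral_mono_ae_restrict huv hac.intervalIntegrable_deriv ((ii_speed hγ u v).const_mul _)
    have h0 : ∀ᵐ t, t ∈ Ioo u v → deriv φ t ≤ enorm2 D * enorm2 (deriv γ t) := by
      filter_upwards [loclip_ae_diff hγ u v] with t ht h
      have hd := (ht h).hasDerivAt
      have e1 : HasDerivAt (fun t => (γ t).1) (deriv γ t).1 t := hd.fst
      have e2 : HasDerivAt (fun t => (γ t).2) (deriv γ t).2 t := hd.snd
      have e3 : HasDerivAt φ (D.1 * (deriv γ t).1 + D.2 * (deriv γ t).2) t :=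
        (e1.const_mul _).add (e2.const_mul _)
      rw [e3.deriv]
      exact inner_le_enorm2 _ _
    rw [← restrict_Ioo_eq_restrict_Icc]
    exact (ae_restrict_iff' measurableSet_Ioo).2 h0
  rw [h1, h2, intervalIntegral.integral_const_mul] at h3
  rcases (enorm2_nonneg D).eq_or_lt with h | h
  · rw [← h]; exact intervalIntegral.integral_nonneg huv fun _ _ => enorm2_nonneg _
  · exact le_of_mul_le_mul_left h3 h

lemma degLen_nonneg {G : ℝ × ℝ → ℝ} (hG : ∀ x, 0 ≤ G x) {a b : ℝ} (hab : a ≤ b) (γ : ℝ → ℝ × ℝ) :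
    0 ≤ degLen G a b γ :=
  intervalIntegral.integral_nonneg hab fun _ _ => mul_nonneg (hG _) (enorm2_nonneg _)

lemma degLen_add {G : ℝ × ℝ → ℝ} (hG : Continuous G) {γ : ℝ → ℝ × ℝ} (hγ : LocallyLipschitz γ)
    (u v w : ℝ) : degLen G u v γ + degLen G v w γ = degLen G u w γ :=
  intervalIntegral.integral_add_adjacent_intervals (ii_energy hG hγ _ _) (ii_energy hG hγ _ _)

lemma degLen_congr {G : ℝ × ℝ → ℝ} {a b : ℝ} (hab : a ≤ b) {γ γ' : ℝ → ℝ × ℝ}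
    (h : ∀ t ∈ Ioo a b, γ t = γ' t) : degLen G a b γ = degLen G a b γ' := by
  unfold degLen
  rw [intervalIntegral.integral_of_le hab, intervalIntegral.integral_of_le hab,
    integral_Ioc_eq_integral_Ioo, integral_Ioc_eq_integral_Ioo]
  apply setIntegral_congr_fun measurableSet_Ioo
  intro t ht
  have : γ =ᶠ[𝓝 t] γ' := by
    filter_upwards [Ioo_mem_nhds ht.1 ht.2] with s hs using h s hs
  simp only [this.deriv_eq, h t ht]

lemma degLen_seg_le {G : ℝ × ℝ → ℝ} (hG : Continuous G) (x D : ℝ × ℝ) {s t M : ℝ} (hst : s < t)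
    (hM : ∀ θ ∈ Icc (0:ℝ) 1, G (x + θ • D) ≤ M) :
    degLen G s t (fun r => x + ((r - s) / (t - s)) • D) ≤ M * enorm2 D := by
  have hts : 0 < t - s := sub_pos.2 hst
  set σ : ℝ → ℝ × ℝ := fun r => x + ((r - s) / (t - s)) • D with hσ
  have hd : ∀ r, HasDerivAt σ ((1 / (t - s)) • D) r := by
    intro r
    have h1 : HasDerivAt (fun r : ℝ => (r - s) / (t - s)) (1 / (t - s)) r :=
      ((hasDerivAt_id r).sub_const s).div_const _
    exact (h1.smul_const D).const_add x
  have hl : LocallyLipschitz σ := by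
    have : ContDiff ℝ 1 σ := by rw [hσ]; fun_prop
    exact this.locallyLipschitz
  have h1 : degLen G s t σ ≤ ∫ _ in s..t, M * (1 / (t - s) * enorm2 D) := by
    unfold degLen
    apply intervalIntegral.integral_mono_on hst.le (ii_energy hG hl s t) (by simp)
    intro r hr
    rw [(hd r).deriv, enorm2_smul, abs_of_nonneg (by positivity)]
    apply mul_le_mul_of_nonneg_right
    · apply hM
      exact ⟨div_nonneg (by linarith [hr.1]) hts.le, (div_le_one hts).2 (by linarith [hr.2])⟩
    · have := enorm2_nonneg D; positivity
  refine h1.trans (le_of_eq ?_)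
  rw [intervalIntegral.integral_const, smul_eq_mul]
  field_simp

lemma surgery {G : ℝ × ℝ → ℝ} (hG : Continuous G) {a b : ℝ} {γ : ℝ → ℝ × ℝ} {p q : ℝ × ℝ}
    (hc : IsCurve a b γ p q) {s t M : ℝ} (has : a ≤ s) (hst : s < t) (htb : t ≤ b)
    (hM : ∀ θ ∈ Icc (0:ℝ) 1, G (γ s + θ • (γ t - γ s)) ≤ M) :
    ∃ γ', IsCurve a b γ' p q ∧
      degLen G a b γ' ≤ degLen G a s γ + M * enorm2 (γ t - γ s) + degLen G t b γ := by
  obtain ⟨hab, hl, rfl, rfl⟩ := hc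
  have hts : 0 < t - s := sub_pos.2 hst
  set γ' : ℝ → ℝ × ℝ := fun r =>
    γ (min r s) + (γ (max r t) - γ t) + ((max s (min r t) - s) / (t - s)) • (γ t - γ s) with hγ'
  have e1 : ∀ r ≤ s, γ' r = γ r := by
    intro r hr
    have h2 : max s (min r t) = s := max_eq_left ((min_le_left _ _).trans hr)
    simp [hγ', h2, min_eq_left hr, max_eq_right (hr.trans hst.le)]
  have e2 : ∀ r, t ≤ r → γ' r = γ r := by
    intro r hr
    have h2 : max s (min r t) = t := by rw [min_eq_right hr, max_eq_right hst.le]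
    simp [hγ', h2, min_eq_right (hst.le.trans hr), max_eq_left hr, div_self hts.ne']
    abel
  have e3 : ∀ r ∈ Ioo s t, γ' r = γ s + ((r - s) / (t - s)) • (γ t - γ s) := by
    intro r hr
    have h2 : max s (min r t) = r := by rw [min_eq_left hr.2.le, max_eq_right hr.1.le]
    simp [hγ', h2, min_eq_right hr.1.le, max_eq_right hr.2.le]
  have hl' : LocallyLipschitz γ' := by
    have i : LocallyLipschitz (fun r : ℝ => r) := LocallyLipschitz.id
    have a1 : LocallyLipschitz (fun r => γ (min r s)) := hl.comp (i.min_const s)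
    have a2 : LocallyLipschitz (fun r => γ (max r t)) := hl.comp (i.max_const t)
    have a3 : LocallyLipschitz (fun r : ℝ => max s (min r t)) := (i.min_const t).const_max s
    have c3 : ContDiff ℝ 1 (fun r : ℝ => ((r - s) / (t - s)) • (γ t - γ s)) := by fun_prop
    have a4 := c3.locallyLipschitz.comp a3
    exact (a1.add (a2.sub (LocallyLipschitz.const (γ t)))).add a4
  refine ⟨γ', ⟨hab, hl', e1 a has, e2 b htb⟩, ?_⟩
  rw [← degLen_add hG hl' a s b, ← degLen_add hG hl' s t b,
    degLen_congr has (fun r hr => e1 r hr.2.le), degLen_congr htb (fun r hr => e2 r hr.1.le),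
    degLen_congr hst.le e3]
  linarith [degLen_seg_le hG (γ s) (γ t - γ s) hst hM]

lemma energy_lip {G : ℝ × ℝ → ℝ} (hG : Continuous G) {γ : ℝ → ℝ × ℝ} (hγ : LocallyLipschitz γ)
    (a b : ℝ) : ∃ K, LipschitzOnWith K (fun t => degLen G a t γ) (Icc a b) := by
  obtain ⟨K, hK⟩ := deriv_bound hγ a b
  obtain ⟨B, hB⟩ := isCompact_Icc.exists_bound_of_continuousOn
    ((hG.comp hγ.continuous).continuousOn (s := Icc a b))
  refine ⟨(B * (2 * K)).toNNReal, LipschitzOnWith.of_dist_le_mul ?_⟩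
  intro x hx y hy
  rw [Real.dist_eq, Real.dist_eq]
  have : degLen G a x γ - degLen G a y γ = ∫ t in y..x, G (γ t) * enorm2 (deriv γ t) :=
    intervalIntegral.integral_interval_sub_left (ii_energy hG hγ _ _) (ii_energy hG hγ _ _)
  rw [this]
  rw [← Real.norm_eq_abs]
  apply intervalIntegral.norm_integral_le_of_norm_le_const
  intro t ht
  have ht' : t ∈ Icc a b := by
    have := uIoc_subset_uIcc ht
    exact uIcc_subset_Icc hy hx this
  rw [norm_mul]
  refine le_trans ?_ (Real.le_coe_toNNReal _)
  have h1 := hB t ht'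
  have h2 : ‖enorm2 (deriv γ t)‖ ≤ 2 * K := by
    rw [Real.norm_eq_abs, abs_of_nonneg (enorm2_nonneg _)]
    linarith [hK t ht', enorm2_le (deriv γ t)]
  exact mul_le_mul h1 h2 (norm_nonneg _) ((norm_nonneg _).trans h1)

lemma energy_cov {G : ℝ × ℝ → ℝ} (hG : Continuous G) {γ : ℝ → ℝ × ℝ} (hγ : LocallyLipschitz γ)
    {a b : ℝ} (hab : a ≤ b) {f : ℝ → ℝ} (hf : Continuous f) :
    ∫ t in a..b, f (degLen G a t γ) * (G (γ t) * enorm2 (deriv γ t)) =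
      ∫ x in (0:ℝ)..(degLen G a b γ), f x := by
  set e : ℝ → ℝ := fun t => degLen G a t γ with he
  set Φ : ℝ → ℝ := fun x => ∫ s in (0:ℝ)..x, f s with hΦ
  have hΦd : ∀ x, HasDerivAt Φ (f x) x := fun x =>
    intervalIntegral.integral_hasDerivAt_right (hf.intervalIntegrable _ _)
      (hf.stronglyMeasurableAtFilter _ _) hf.continuousAt
  have hΦc : ContDiff ℝ 1 Φ := by
    rw [contDiff_one_iff_deriv]
    refine ⟨fun x => (hΦd x).differentiableAt, ?_⟩
    have : deriv Φ = f := funext fun x => (hΦd x).deriv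
    rwa [this]
  obtain ⟨K, hK⟩ := energy_lip hG hγ a b
  have hcomp : IsCompact (e '' Icc a b) := isCompact_Icc.image_of_continuousOn hK.continuousOn
  obtain ⟨K', hK'⟩ :=
    hΦc.locallyLipschitz.locallyLipschitzOn.exists_lipschitzOnWith_of_compact hcomp
  have hcl : LipschitzOnWith (K' * K) (Φ ∘ e) (uIcc a b) := by
    rw [uIcc_of_le hab]
    exact hK'.comp hK (mapsTo_image _ _)
  have h1 := hcl.absolutelyContinuousOnInterval.integral_deriv_eq_sub
  have h2 : (Φ ∘ e) b - (Φ ∘ e) a = Φ (degLen G a b γ) := by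
    simp [he, hΦ, degLen]
  rw [h2] at h1
  rw [← hΦ] at *
  change _ = Φ (degLen G a b γ)
  rw [← h1]
  apply intervalIntegral.integral_congr_ae
  have hae := (ii_energy hG hγ a b).ae_hasDerivAt_integral
  filter_upwards [hae] with t ht hm
  have := ht (uIoc_subset_uIcc hm) a left_mem_uIcc
  exact ((hΦd (e t)).comp t this).deriv.symm

lemma well_lower {W : ℝ × ℝ → ℝ} {w : ℝ × ℝ} (hs : ContDiff ℝ (⊤ : ℕ∞) W) (h0 : ∀ x, 0 ≤ W x)
    (hw : W w = 0) (hh : ∀ v : ℝ × ℝ, v ≠ 0 → 0 < iteratedFDeriv ℝ 2 W w ![v, v]) :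
    ∃ c > 0, ∃ δ > 0, ∀ x, ‖x - w‖ < δ → c * ‖x - w‖ ^ 2 ≤ W x := by
  set B := fderiv ℝ (fderiv ℝ W) w with hB
  have hB' : ∀ v : ℝ × ℝ, v ≠ 0 → 0 < B v v := by
    intro v hv
    have := hh v hv
    rw [iteratedFDeriv_two_apply] at this
    simpa using this
  have hdW : Differentiable ℝ W := hs.differentiable (by simp)
  have hdd : Differentiable ℝ (fderiv ℝ W) :=
    (hs.fderiv_right (m := 1) (WithTop.coe_le_coe.2 le_top : ((1 + 1 : ℕ∞) : WithTop ℕ∞) ≤ _)).differentiable (by simp)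
  have hD0 : fderiv ℝ W w = 0 :=
    IsLocalMin.fderiv_eq_zero (Eventually.of_forall fun x => by rw [hw]; exact h0 x)
  -- lower bound for the quadratic form
  obtain ⟨lam, hlam, hlam'⟩ : ∃ l > 0, ∀ v, l * ‖v‖ ^ 2 ≤ B v v := by
    have hcmp : IsCompact (Metric.sphere (0 : ℝ × ℝ) 1) := isCompact_sphere _ _
    have hne : (Metric.sphere (0 : ℝ × ℝ) 1).Nonempty := NormedSpace.sphere_nonempty.2 zero_le_one
    have hcont : Continuous fun v : ℝ × ℝ => B v v := by fun_prop
    obtain ⟨v0, hv0, hmin⟩ := hcmp.exists_isMinOn hne hcont.continuousOn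
    have hv0n : v0 ≠ 0 := by
      rintro rfl
      simp at hv0
    refine ⟨B v0 v0, hB' v0 hv0n, fun v => ?_⟩
    rcases eq_or_ne v 0 with rfl | hv
    · simp
    have hn : 0 < ‖v‖ := norm_pos_iff.2 hv
    have h1 : B v0 v0 ≤ B (‖v‖⁻¹ • v) (‖v‖⁻¹ • v) := hmin (by simp [norm_smul, hn.ne'])
    simp only [map_smul, smul_apply, smul_eq_mul] at h1
    calc B v0 v0 * ‖v‖ ^ 2 ≤ (‖v‖⁻¹ * (‖v‖⁻¹ * B v v)) * ‖v‖ ^ 2 := by gcongr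
      _ = B v v := by field_simp
  have hdo := (hdd w).hasFDerivAt.isLittleO.def (half_pos hlam)
  rw [Metric.eventually_nhds_iff] at hdo
  obtain ⟨δ, hδ, hball⟩ := hdo
  have key : ∀ x, ‖x - w‖ < δ → lam / 2 * ‖x - w‖ ^ 2 ≤ fderiv ℝ W x (x - w) := by
    intro x hx
    have h1 := hball (y := x) (by rwa [dist_eq_norm])
    rw [hD0, sub_zero, ← hB] at h1
    have h2 := (fderiv ℝ W x - B (x - w)).le_opNorm (x - w)
    have h3 : ‖(fderiv ℝ W x - B (x - w)) (x - w)‖ ≤ lam / 2 * ‖x - w‖ * ‖x - w‖ :=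
      h2.trans (by gcongr)
    rw [sub_apply, Real.norm_eq_abs] at h3
    have h4 := (abs_le.1 h3).1
    have h5 := hlam' (x - w)
    nlinarith
  refine ⟨lam / 4, by positivity, δ, hδ, fun x hx => ?_⟩
  set v := x - w with hv
  set φ : ℝ → ℝ := fun t => W (w + t • v) - lam / 4 * t ^ 2 * ‖v‖ ^ 2 with hφ
  have hφd : ∀ t, HasDerivAt φ (fderiv ℝ W (w + t • v) v - lam / 4 * (2 * t) * ‖v‖ ^ 2) t := by
    intro t
    have e1 : HasDerivAt (fun t : ℝ => w + t • v) v t := by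
      simpa using ((hasDerivAt_id t).smul_const v).const_add w
    have e2 : HasDerivAt (fun t : ℝ => W (w + t • v)) (fderiv ℝ W (w + t • v) v) t :=
      (hdW (w + t • v)).hasFDerivAt.comp_hasDerivAt t e1
    have e3 : HasDerivAt (fun t : ℝ => lam / 4 * t ^ 2 * ‖v‖ ^ 2)
        (lam / 4 * (2 * t) * ‖v‖ ^ 2) t := by
      simpa using (((hasDerivAt_id t).pow 2).const_mul (lam / 4)).mul_const (‖v‖ ^ 2)
    exact e2.sub e3
  have hmono : MonotoneOn φ (Icc 0 1) := by
    apply monotoneOn_of_deriv_nonneg (convex_Icc 0 1)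
    · exact fun t _ => (hφd t).continuousAt.continuousWithinAt
    · exact fun t _ => (hφd t).differentiableAt.differentiableWithinAt
    · intro t ht
      rw [interior_Icc] at ht
      rw [(hφd t).deriv]
      have hnv : ‖(w + t • v) - w‖ = t * ‖v‖ := by
        rw [add_sub_cancel_left, norm_smul, Real.norm_eq_abs, abs_of_pos ht.1]
      have := key (w + t • v) (by rw [hnv]; nlinarith [norm_nonneg v, ht.1, ht.2])
      rw [hnv, add_sub_cancel_left, map_smul, smul_eq_mul] at this
      have h6 : t * (lam / 2 * t * ‖v‖ ^ 2) ≤ t * fderiv ℝ W (w + t • v) v := by nlinarith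
      have := le_of_mul_le_mul_left h6 ht.1
      linarith
  have := hmono (left_mem_Icc.2 zero_le_one) (right_mem_Icc.2 zero_le_one) zero_le_one
  simp only [hφ, hv] at this
  simp [hw] at this
  linarith

lemma well_upper {W : ℝ × ℝ → ℝ} {w : ℝ × ℝ} (hs : ContDiff ℝ (⊤ : ℕ∞) W) (h0 : ∀ x, 0 ≤ W x)
    (hw : W w = 0) :
    ∃ C ≥ 0, ∀ x, ‖x - w‖ ≤ 1 → W x ≤ C * ‖x - w‖ ^ 2 := by
  have hdW : Differentiable ℝ W := hs.differentiable (by simp)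
  have hD0 : fderiv ℝ W w = 0 :=
    IsLocalMin.fderiv_eq_zero (Eventually.of_forall fun x => by rw [hw]; exact h0 x)
  have hc1 : ContDiff ℝ 1 (fderiv ℝ W) := hs.fderiv_right (m := 1) (WithTop.coe_le_coe.2 le_top : ((1 + 1 : ℕ∞) : WithTop ℕ∞) ≤ _)
  obtain ⟨K, hK⟩ := hc1.locallyLipschitz.locallyLipschitzOn.exists_lipschitzOnWith_of_compact
    (isCompact_closedBall w 1)
  refine ⟨K, K.2, fun x hx => ?_⟩
  have hwm : w ∈ Metric.closedBall w ‖x - w‖ := by simp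
  have h1 := (convex_closedBall w ‖x - w‖).norm_image_sub_le_of_norm_fderiv_le (𝕜 := ℝ) (f := W)
    (C := K * ‖x - w‖) (fun y _ => hdW y) ?_ hwm (y := x) (by simp [dist_eq_norm])
  · rw [hw, sub_zero, Real.norm_eq_abs] at h1
    calc W x ≤ |W x| := le_abs_self _
      _ ≤ _ := h1
      _ = _ := by ring
  · intro y hy
    rw [Metric.mem_closedBall] at hy
    have := hK.dist_le_mul y (by rw [Metric.mem_closedBall]; linarith) w (by simp)
    rw [hD0, dist_zero_right] at this
    exact this.trans (by gcongr)

lemma pot_bounds {W : ℝ × ℝ → ℝ} {pm pp : ℝ × ℝ} (hW : TwoWell W pm pp) :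
    (∃ C ≥ 0, ∀ w, (w = pm ∨ w = pp) → ∀ x, ‖x - w‖ ≤ 1 → √(W x) ≤ C * ‖x - w‖) ∧
    (∃ c > 0, ∀ x, c ≤ √(W x) ∨ ∃ w, (w = pm ∨ w = pp) ∧ ‖x - w‖ ≤ 1 ∧ c * ‖x - w‖ ≤ √(W x)) := by
  have hm0 : W pm = 0 := (hW.zeroSet pm).2 (Or.inl rfl)
  have hp0 : W pp = 0 := (hW.zeroSet pp).2 (Or.inr rfl)
  constructor
  · obtain ⟨C1, hC1, h1⟩ := well_upper hW.smooth hW.nonneg hm0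
    obtain ⟨C2, hC2, h2⟩ := well_upper hW.smooth hW.nonneg hp0
    refine ⟨√(C1 + C2), Real.sqrt_nonneg _, ?_⟩
    rintro w hw x hx
    apply Real.sqrt_le_iff.2 ⟨by positivity, ?_⟩
    rw [mul_pow, Real.sq_sqrt (by positivity)]
    have hq := sq_nonneg ‖x - w‖
    rcases hw with rfl | rfl
    · nlinarith [h1 x hx]
    · nlinarith [h2 x hx]
  · obtain ⟨c1, hc1, d1, hd1, h1⟩ := well_lower hW.smooth hW.nonneg hm0 hW.hess_m
    obtain ⟨c2, hc2, d2, hd2, h2⟩ := well_lower hW.smooth hW.nonneg hp0 hW.hess_p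
    obtain ⟨c3, hc3, R, h3⟩ := hW.coercive
    have hcont : Continuous W := hW.smooth.continuous
    set e1 := min d1 1
    set e2 := min d2 1
    have he1 : 0 < e1 := lt_min hd1 one_pos
    have he2 : 0 < e2 := lt_min hd2 one_pos
    set S := Metric.closedBall (0 : ℝ × ℝ) R \ (Metric.ball pm e1 ∪ Metric.ball pp e2) with hS
    have hSc : IsCompact S :=
      (isCompact_closedBall _ _).diff (Metric.isOpen_ball.union Metric.isOpen_ball)
    obtain ⟨c4, hc4, h4⟩ : ∃ c > 0, ∀ x ∈ S, c ≤ W x := by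
      rcases S.eq_empty_or_nonempty with h | h
      · exact ⟨1, one_pos, by simp [h]⟩
      · obtain ⟨x0, hx0, hmin⟩ := hSc.exists_isMinOn h hcont.continuousOn
        refine ⟨W x0, lt_of_le_of_ne (hW.nonneg x0) (fun h => ?_), fun x hx => hmin hx⟩
        rcases (hW.zeroSet x0).1 h.symm with rfl | rfl
        · exact hx0.2 (Or.inl (Metric.mem_ball_self he1))
        · exact hx0.2 (Or.inr (Metric.mem_ball_self he2))
    set c := min (min c1 c2) (min c3 c4) with hcdef
    have hc : 0 < c := by simp [hcdef, hc1, hc2, hc3, hc4]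
    have k1 : c ≤ c1 := (min_le_left _ _).trans (min_le_left _ _)
    have k2 : c ≤ c2 := (min_le_left _ _).trans (min_le_right _ _)
    have k3 : c ≤ c3 := (min_le_right _ _).trans (min_le_left _ _)
    have k4 : c ≤ c4 := (min_le_right _ _).trans (min_le_right _ _)
    have aux : ∀ w x, c * ‖x - w‖ ^ 2 ≤ W x → √c * ‖x - w‖ ≤ √(W x) := by
      intro w x h
      apply Real.le_sqrt_of_sq_le
      rw [mul_pow, Real.sq_sqrt hc.le]
      exact h
    refine ⟨√c, Real.sqrt_pos.2 hc, fun x => ?_⟩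
    by_cases hx1 : x ∈ Metric.ball pm e1
    · right
      rw [mem_ball_iff_norm] at hx1
      refine ⟨pm, Or.inl rfl, (hx1.le.trans (min_le_right _ _)), aux _ _ ?_⟩
      have := h1 x (hx1.trans_le (min_le_left _ _))
      exact le_trans (by gcongr) this
    by_cases hx2 : x ∈ Metric.ball pp e2
    · right
      rw [mem_ball_iff_norm] at hx2
      refine ⟨pp, Or.inr rfl, (hx2.le.trans (min_le_right _ _)), aux _ _ ?_⟩
      have := h2 x (hx2.trans_le (min_le_left _ _))
      exact le_trans (by gcongr) this
    left
    apply Real.sqrt_le_sqrt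
    by_cases hx3 : R ≤ ‖x‖
    · exact k3.trans (h3 x hx3)
    · refine k4.trans (h4 x ⟨?_, ?_⟩)
      · simpa using (not_le.1 hx3).le
      · rintro (h | h)
        exacts [hx1 h, hx2 h]

lemma piece_le {G : ℝ × ℝ → ℝ} (hG : Continuous G) (hG0 : ∀ x, 0 ≤ G x) {a b : ℝ} {γ : ℝ → ℝ × ℝ}
    {p q : ℝ × ℝ} (hc : IsCurve a b γ p q) {η : ℝ} (hη : 0 ≤ η)
    (hmin : ∀ γ', IsCurve a b γ' p q → degLen G a b γ ≤ degLen G a b γ' + η)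
    {w : ℝ × ℝ} {r M : ℝ} (hM : ∀ x, ‖x - w‖ ≤ r → G x ≤ M)
    {s t : ℝ} (hs : s ∈ Icc a b) (ht : t ∈ Icc a b) (hsr : ‖γ s - w‖ ≤ r) (htr : ‖γ t - w‖ ≤ r) :
    |degLen G a t γ - degLen G a s γ| ≤ M * (4 * r) + η := by
  wlog hst : s ≤ t generalizing s t
  · rw [abs_sub_comm]
    exact this ht hs htr hsr (le_of_not_ge hst)
  have hr : 0 ≤ r := (norm_nonneg _).trans hsr
  have hM0 : 0 ≤ M := (hG0 _).trans (hM _ hsr)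
  rcases hst.eq_or_lt with rfl | hst
  · simp; positivity
  obtain ⟨γ', hγ', hle⟩ := surgery hG hc hs.1 hst ht.2 (M := M) (by
    intro θ hθ
    apply hM
    have hcv := (convex_closedBall w r).add_smul_sub_mem (x := γ s) (y := γ t)
      (by rwa [mem_closedBall_iff_norm]) (by rwa [mem_closedBall_iff_norm]) hθ
    rwa [mem_closedBall_iff_norm] at hcv)
  have h1 := hmin γ' hγ'
  have h2 := degLen_add hG hc.2.1 a s t
  have h3 := degLen_add hG hc.2.1 a t b
  have h4 : enorm2 (γ t - γ s) ≤ 4 * r := by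
    have := enorm2_le (γ t - γ s)
    have h5 : ‖γ t - γ s‖ ≤ ‖γ t - w‖ + ‖γ s - w‖ := by
      rw [← sub_sub_sub_cancel_right (γ t) (γ s) w]; exact norm_sub_le _ _
    linarith
  have h5 : M * enorm2 (γ t - γ s) ≤ M * (4 * r) := by gcongr
  have h6 := degLen_nonneg hG0 hst.le γ
  rw [abs_le]
  constructor
  · have : 0 ≤ M * (4 * r) := by positivity
    linarith
  · linarith

lemma int_bound {e T K ε : ℝ} (he : e ∈ Icc 0 T) (hT : T ≤ K) (hε : 0 < ε) (hε1 : ε ≤ 1) :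
    ∫ x in (0:ℝ)..T, 1 / √(|x - e| + ε ^ 2) ≤ 4 * √(K + 1) := by
  have hcont : Continuous fun x : ℝ => 1 / √(|x - e| + ε ^ 2) := by
    apply Continuous.div (by fun_prop) (by fun_prop)
    intro x; positivity
  rw [← intervalIntegral.integral_add_adjacent_intervals (b := e) (hcont.intervalIntegrable _ _)
    (hcont.intervalIntegrable _ _)]
  have hsq : ε ^ 2 ≤ 1 := by nlinarith
  have h1 : ∫ x in (0:ℝ)..e, 1 / √(|x - e| + ε ^ 2) ≤ 2 * √(K + 1) := by
    have : ∫ x in (0:ℝ)..e, 1 / √(|x - e| + ε ^ 2) =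
        -(2 * √(e - e + ε ^ 2)) - -(2 * √(e - 0 + ε ^ 2)) := by
      apply intervalIntegral.integral_eq_sub_of_hasDerivAt
        (f := fun x => -(2 * √(e - x + ε ^ 2))) _ (hcont.intervalIntegrable _ _)
      intro x hx
      rw [uIcc_of_le he.1] at hx
      have hp : 0 < e - x + ε ^ 2 := by have := hx.2; have := sq_pos_of_pos hε; linarith
      rw [abs_of_nonpos (by linarith [hx.2]), neg_sub]
      have h : HasDerivAt (fun x => -(2 * √(e - x + ε ^ 2)))
          (-(2 * (-1 / (2 * √(e - x + ε ^ 2))))) x :=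
        (((((hasDerivAt_id x).const_sub e).add_const (ε ^ 2)).sqrt hp.ne').const_mul 2).neg
      have hS := (Real.sqrt_pos.2 hp).ne'
      refine h.congr_deriv ?_
      field_simp
    rw [this]
    have : √(e - 0 + ε ^ 2) ≤ √(K + 1) := Real.sqrt_le_sqrt (by linarith [he.2])
    linarith [Real.sqrt_nonneg (e - e + ε ^ 2)]
  have h2 : ∫ x in e..T, 1 / √(|x - e| + ε ^ 2) ≤ 2 * √(K + 1) := by
    have : ∫ x in e..T, 1 / √(|x - e| + ε ^ 2) =
        (2 * √(T - e + ε ^ 2)) - (2 * √(e - e + ε ^ 2)) := by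
      apply intervalIntegral.integral_eq_sub_of_hasDerivAt
        (f := fun x => (2 * √(x - e + ε ^ 2))) _ (hcont.intervalIntegrable _ _)
      intro x hx
      rw [uIcc_of_le he.2] at hx
      have hp : 0 < x - e + ε ^ 2 := by have := hx.1; have := sq_pos_of_pos hε; linarith
      rw [abs_of_nonneg (by linarith [hx.1])]
      have h : HasDerivAt (fun x => (2 * √(x - e + ε ^ 2)))
          (2 * (1 / (2 * √(x - e + ε ^ 2)))) x :=
        (((((hasDerivAt_id x).sub_const e).add_const (ε ^ 2)).sqrt hp.ne').const_mul 2)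
      have hS := (Real.sqrt_pos.2 hp).ne'
      refine h.congr_deriv ?_
      field_simp
    rw [this]
    have : √(T - e + ε ^ 2) ≤ √(K + 1) := Real.sqrt_le_sqrt (by linarith [he.1])
    linarith [Real.sqrt_nonneg (e - e + ε ^ 2)]
  linarith

lemma length_bound {F : ℝ × ℝ → ℝ} (hF : Continuous F) (hF0 : ∀ x, 0 ≤ F x) {pm pp p q : ℝ × ℝ}
    {C c : ℝ} (hC : 0 ≤ C) (hc : 0 < c)
    (hup : ∀ w, (w = pm ∨ w = pp) → ∀ x, ‖x - w‖ ≤ 1 → F x ≤ C * ‖x - w‖)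
    (hlo : ∀ x, c ≤ F x ∨ ∃ w, (w = pm ∨ w = pp) ∧ ‖x - w‖ ≤ 1 ∧ c * ‖x - w‖ ≤ F x)
    (K : ℝ) (hK : 0 ≤ K) :
    ∃ L, ∀ ε, 0 < ε → ε ≤ 1 → ∀ a b γ, IsCurve a b γ p q →
      degLen (fun x => F x + ε) a b γ ≤ K →
      (∀ γ', IsCurve a b γ' p q →
        degLen (fun x => F x + ε) a b γ ≤ degLen (fun x => F x + ε) a b γ' + ε ^ 2) →
      degLen (fun _ => 1) a b γ ≤ L := by
  set c1 := min c 1 with hc1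
  have hc1p : 0 < c1 := lt_min hc one_pos
  set C2 := 4 * C + 4 + K with hC2
  have hC2p : 0 < C2 := by positivity
  set κ := c1 / √C2 with hκ
  have hκp : 0 < κ := div_pos hc1p (Real.sqrt_pos.2 hC2p)
  refine ⟨κ⁻¹ * (4 * √(K + 1) + 4 * √(K + 1)), ?_⟩
  intro ε hε hε1 a b γ hcur hKle hmin
  set G : ℝ × ℝ → ℝ := fun x => F x + ε with hGdef
  have hG : Continuous G := by fun_prop
  have hG0 : ∀ x, 0 ≤ G x := fun x => add_nonneg (hF0 x) hε.le
  have hab := hcur.1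
  have hl := hcur.2.1
  set e : ℝ → ℝ := fun t => degLen G a t γ with he
  have hemem : ∀ t ∈ Icc a b, e t ∈ Icc 0 (e b) := by
    intro t ht
    refine ⟨degLen_nonneg hG0 ht.1 γ, ?_⟩
    have := degLen_add hG hl a t b
    have := degLen_nonneg hG0 ht.2 γ
    simp only [he]; linarith
  have hnear : ∀ w, ∃ τ ∈ Icc a b, ∀ t ∈ Icc a b, ‖γ τ - w‖ ≤ ‖γ t - w‖ := by
    intro w
    have hcn : Continuous fun t => ‖γ t - w‖ := by
      have := hl.continuous; fun_prop
    obtain ⟨τ, hτ, h⟩ := isCompact_Icc.exists_isMinOn (nonempty_Icc.2 hab) hcn.continuousOn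
    exact ⟨τ, hτ, fun t ht => h ht⟩
  choose τ hτ hτmin using hnear
  have key : ∀ t ∈ Icc a b, ∃ w, (w = pm ∨ w = pp) ∧
      κ * √(|e t - e (τ w)| + ε ^ 2) ≤ G (γ t) := by
    intro t ht
    have hfin : ∀ w, ∀ y, 0 ≤ y → |e t - e (τ w)| + ε ^ 2 ≤ C2 * y ^ 2 → c1 * y ≤ G (γ t) →
        κ * √(|e t - e (τ w)| + ε ^ 2) ≤ G (γ t) := by
      intro w y hy h1 h2
      have h3 : √(|e t - e (τ w)| + ε ^ 2) ≤ √C2 * y := by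
        rw [← Real.sqrt_sq hy, ← Real.sqrt_mul hC2p.le]
        exact Real.sqrt_le_sqrt h1
      have h4 := Real.sqrt_pos.2 hC2p
      calc κ * √(|e t - e (τ w)| + ε ^ 2) ≤ κ * (√C2 * y) := by gcongr
        _ = c1 * y := by rw [hκ]; field_simp
        _ ≤ _ := h2
    rcases hlo (γ t) with h | ⟨w, hw, hw1, hwl⟩
    · refine ⟨pm, Or.inl rfl, hfin pm 1 zero_le_one ?_ ?_⟩
      · have h1 := hemem t ht
        have h2 := hemem _ (hτ pm)
        have h3 : |e t - e (τ pm)| ≤ K := by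
          rw [abs_le]; constructor <;> linarith [h1.1, h1.2, h2.1, h2.2]
        nlinarith
      · simp only [hGdef]
        have : c1 ≤ c := min_le_left _ _
        linarith
    · refine ⟨w, hw, hfin w (‖γ t - w‖ + ε) (by positivity) ?_ ?_⟩
      · set ρ := ‖γ t - w‖ with hρ
        have hρ0 : 0 ≤ ρ := norm_nonneg _
        have := piece_le hG hG0 hcur (sq_nonneg ε) hmin (w := w) (r := ρ) (M := C * ρ + ε) (by
          intro x hx
          simp only [hGdef]
          have := hup w hw x (hx.trans hw1)
          have h2 : C * ‖x - w‖ ≤ C * ρ := by gcongr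
          linarith) (hτ w) ht (hτmin w t ht) le_rfl
        have h3 : 0 ≤ C * (ρ * ε) := by positivity
        have h4 : 0 ≤ C * ε ^ 2 := by positivity
        have h5 : 0 ≤ K * (ρ + ε) ^ 2 := by positivity
        have h6 : 0 ≤ ρ * ε := by positivity
        rw [hC2]
        simp only [he]
        nlinarith [sq_nonneg ρ, sq_nonneg ε]
      · simp only [hGdef]
        have k1 : c1 ≤ c := min_le_left _ _
        have k2 : c1 ≤ 1 := min_le_right _ _
        have : c1 * ‖γ t - w‖ ≤ c * ‖γ t - w‖ := by gcongr
        nlinarith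
  set f : ℝ × ℝ → ℝ → ℝ := fun w x => 1 / √(|x - e (τ w)| + ε ^ 2) with hf
  have hfc : ∀ w, Continuous (f w) := by
    intro w
    apply Continuous.div (by fun_prop) (by fun_prop)
    intro x; positivity
  have hf0 : ∀ w x, 0 ≤ f w x := fun w x => by simp only [hf]; positivity
  have hint : ∀ w, ∫ t in a..b, f w (e t) * (G (γ t) * enorm2 (deriv γ t)) ≤ 4 * √(K + 1) := by
    intro w
    rw [energy_cov hG hl hab (hfc w)]
    exact int_bound (hemem _ (hτ w)) hKle hε hε1
  have hecont : ContinuousOn e (uIcc a b) := by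
    obtain ⟨K', hK'⟩ := energy_lip hG hl a b
    rw [uIcc_of_le hab]
    exact hK'.continuousOn
  have hii : ∀ w, IntervalIntegrable (fun t => f w (e t) * (G (γ t) * enorm2 (deriv γ t)))
      volume a b := fun w =>
    (ii_energy hG hl a b).continuousOn_mul ((hfc w).comp_continuousOn hecont)
  have hfinal : degLen (fun _ => 1) a b γ ≤ ∫ t in a..b, κ⁻¹ *
      (f pm (e t) * (G (γ t) * enorm2 (deriv γ t)) +
        f pp (e t) * (G (γ t) * enorm2 (deriv γ t))) := by
    unfold degLen
    apply intervalIntegral.integral_mono_on hab (by simpa using ii_speed hl a b)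
      (((hii pm).add (hii pp)).const_mul _)
    intro t ht
    have hE := enorm2_nonneg (deriv γ t)
    have h0 : ∀ w, 0 ≤ f w (e t) * (G (γ t) * enorm2 (deriv γ t)) := fun w =>
      mul_nonneg (hf0 _ _) (mul_nonneg (hG0 _) hE)
    obtain ⟨w, hw, hle⟩ := key t ht
    have h1 : 1 * enorm2 (deriv γ t) ≤
        κ⁻¹ * (f w (e t) * (G (γ t) * enorm2 (deriv γ t))) := by
      have hS : 0 < √(|e t - e (τ w)| + ε ^ 2) := by positivity
      have : 1 ≤ κ⁻¹ * (f w (e t) * G (γ t)) := by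
        simp only [hf]
        rw [inv_mul_eq_div, le_div_iff₀ hκp, one_mul, one_div_mul_eq_div, le_div_iff₀ hS]
        exact hle
      calc 1 * enorm2 (deriv γ t) ≤ κ⁻¹ * (f w (e t) * G (γ t)) * enorm2 (deriv γ t) := by gcongr
        _ = _ := by ring
    refine h1.trans (mul_le_mul_of_nonneg_left ?_ (inv_pos.2 hκp).le)
    rcases hw with rfl | rfl
    · linarith [h0 pp]
    · linarith [h0 pm]
  rw [intervalIntegral.integral_const_mul, intervalIntegral.integral_add (hii pm) (hii pp)] at hfinal
  refine hfinal.trans (mul_le_mul_of_nonneg_left ?_ (inv_pos.2 hκp).le)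
  linarith [hint pm, hint pp]

lemma reparam {a b : ℝ} {γ : ℝ → ℝ × ℝ} {p q : ℝ × ℝ} (hc : IsCurve a b γ p q) {L : ℝ}
    (hL : degLen (fun _ => 1) a b γ ≤ L) :
    ∃ σ : ℝ → ℝ × ℝ, (∀ s s', ‖σ s - σ s'‖ ≤ L * |s - s'|) ∧ σ 0 = p ∧ σ 1 = q ∧
      (∀ s, ‖σ s‖ ≤ ‖p‖ + L) ∧
      ∀ F : ℝ × ℝ → ℝ, Continuous F → (∀ x, 0 ≤ F x) → ∀ ω δ : ℝ, 0 ≤ ω →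
        (∀ x y, ‖x‖ ≤ ‖p‖ + L → ‖y‖ ≤ ‖p‖ + L → ‖x - y‖ ≤ δ → F x ≤ F y + ω) →
        ∀ (u : ℕ → ℝ) (N : ℕ), Monotone u → (∀ j, L * (u (j + 1) - u j) ≤ δ) →
          ∑ j ∈ Finset.range N, F (σ (u j)) * enorm2 (σ (u (j + 1)) - σ (u j)) ≤
            degLen F a b γ + ω * L := by
  obtain ⟨hab, hl, rfl, rfl⟩ := hc
  have h1c : Continuous (fun _ : ℝ × ℝ => (1:ℝ)) := continuous_const
  have h10 : ∀ x : ℝ × ℝ, (0:ℝ) ≤ (fun _ => 1) x := fun _ => zero_le_one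
  set ℓ : ℝ → ℝ := fun t => degLen (fun _ => 1) a t γ with hℓ
  have hsub : ∀ s t, ∫ r in s..t, enorm2 (deriv γ r) = ℓ t - ℓ s := by
    intro s t
    have := degLen_add h1c hl a s t
    have h2 : degLen (fun _ => 1) s t γ = ∫ r in s..t, enorm2 (deriv γ r) := by simp [degLen]
    simp only [hℓ]; linarith
  have hmono : Monotone ℓ := by
    intro s t hst
    have := hsub s t
    have h2 : 0 ≤ ∫ r in s..t, enorm2 (deriv γ r) :=
      intervalIntegral.integral_nonneg hst fun _ _ => enorm2_nonneg _
    linarith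
  have hℓa : ℓ a = 0 := by simp [hℓ, degLen]
  have hℓb0 : 0 ≤ ℓ b := by rw [← hℓa]; exact hmono hab
  have hL0 : 0 ≤ L := hℓb0.trans hL
  have hdist : ∀ s t, s ≤ t → ‖γ t - γ s‖ ≤ ℓ t - ℓ s := by
    intro s t hst
    rw [← hsub]
    exact (norm_le_enorm2 _).trans (ftc_ineq hl hst)
  have hdist' : ∀ s t, ‖γ t - γ s‖ ≤ |ℓ t - ℓ s| := by
    intro s t
    rcases le_total s t with h | h
    · exact (hdist s t h).trans (le_abs_self _)
    · rw [norm_sub_rev, abs_sub_comm]; exact (hdist t s h).trans (le_abs_self _)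
  have hℓcont : ContinuousOn ℓ (Icc a b) := by
    obtain ⟨K, hK⟩ := energy_lip h1c hl a b
    exact hK.continuousOn
  have hivt : ∀ y, ∃ t, y ∈ Icc 0 (ℓ b) → t ∈ Icc a b ∧ ℓ t = y := by
    intro y
    by_cases hy : y ∈ Icc 0 (ℓ b)
    · have := intermediate_value_Icc hab hℓcont
      rw [hℓa] at this
      obtain ⟨t, ht, h⟩ := this hy
      exact ⟨t, fun _ => ⟨ht, h⟩⟩
    · exact ⟨0, fun h => absurd h hy⟩
  choose T hT using hivt
  set cl : ℝ → ℝ := fun s => max 0 (min s 1) with hcl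
  have hcl0 : ∀ s, 0 ≤ cl s := fun s => le_max_left _ _
  have hcl1 : ∀ s, cl s ≤ 1 := fun s => max_le zero_le_one (min_le_right _ _)
  have hclm : Monotone cl := fun s t h => max_le_max le_rfl (min_le_min h le_rfl)
  have hcld : ∀ s t, s ≤ t → cl t - cl s ≤ t - s := by
    intro s t h
    simp only [hcl]
    rcases le_total s 1 with h1 | h1 <;> rcases le_total t 1 with h2 | h2 <;>
      rcases le_total 0 s with h3 | h3 <;> rcases le_total 0 t with h4 | h4 <;>
      simp [*] <;> linarith
  have hym : ∀ s, ℓ b * cl s ∈ Icc 0 (ℓ b) := fun s =>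
    ⟨mul_nonneg hℓb0 (hcl0 s), mul_le_of_le_one_right hℓb0 (hcl1 s)⟩
  set τ : ℝ → ℝ := fun s => T (ℓ b * cl s) with hτ
  have hτm : ∀ s, τ s ∈ Icc a b := fun s => (hT _ (hym s)).1
  have hτℓ : ∀ s, ℓ (τ s) = ℓ b * cl s := fun s => (hT _ (hym s)).2
  have hτmono : Monotone τ := by
    intro s t hst
    have hle : ℓ b * cl s ≤ ℓ b * cl t := mul_le_mul_of_nonneg_left (hclm hst) hℓb0
    rcases hle.eq_or_lt with h | h
    · simp only [hτ, h]; exact le_rfl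
    · by_contra hcon
      have := hmono (not_le.1 hcon).le
      rw [hτℓ, hτℓ] at this
      linarith
  have hℓd : ∀ s t, s ≤ t → ℓ (τ t) - ℓ (τ s) ≤ L * (t - s) := by
    intro s t h
    rw [hτℓ, hτℓ, ← mul_sub]
    exact mul_le_mul hL (hcld s t h) (by linarith [hclm h]) hL0
  have hball : ∀ t ∈ Icc a b, ‖γ t‖ ≤ ‖γ a‖ + L := by
    intro t ht
    have h1 := hdist a t ht.1
    have h2 := hmono ht.2
    have h3 : ‖γ t‖ ≤ ‖γ a‖ + ‖γ t - γ a‖ := by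
      have := norm_add_le (γ a) (γ t - γ a); simpa using this
    have hL' : ℓ b ≤ L := hL
    linarith
  refine ⟨fun s => γ (τ s), ?_, ?_, ?_, fun s => hball _ (hτm s), ?_⟩
  · intro s s'
    wlog h : s ≤ s' generalizing s s'
    · rw [norm_sub_rev, abs_sub_comm]; exact this s' s (le_of_not_ge h)
    rw [norm_sub_rev, abs_sub_comm, abs_of_nonneg (sub_nonneg.2 h)]
    exact (hdist _ _ (hτmono h)).trans (hℓd _ _ h)
  · have := hdist' a (τ 0)
    rw [hτℓ, hℓa] at this
    simp [hcl] at this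
    exact sub_eq_zero.1 this
  · have := hdist' b (τ 1)
    rw [hτℓ] at this
    simp [hcl] at this
    exact sub_eq_zero.1 this
  · intro F hF hF0 ω δ hω hFω u N hu hδ
    have hterm : ∀ j, F (γ (τ (u j))) * enorm2 (γ (τ (u (j + 1))) - γ (τ (u j))) ≤
        (degLen F a (τ (u (j + 1))) γ + ω * ℓ (τ (u (j + 1)))) -
          (degLen F a (τ (u j)) γ + ω * ℓ (τ (u j))) := by
      intro j
      have hle := hτmono (hu (Nat.le_succ j))
      set t := τ (u j) with ht
      set t' := τ (u (j + 1)) with ht'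
      have h1 := degLen_add hF hl a t t'
      have h2 : F (γ t) * enorm2 (γ t' - γ t) ≤ degLen F t t' γ + ω * (ℓ t' - ℓ t) := by
        calc F (γ t) * enorm2 (γ t' - γ t) ≤ F (γ t) * ∫ r in t..t', enorm2 (deriv γ r) :=
              mul_le_mul_of_nonneg_left (ftc_ineq hl hle) (hF0 _)
          _ = ∫ r in t..t', F (γ t) * enorm2 (deriv γ r) := by
              rw [intervalIntegral.integral_const_mul]
          _ ≤ ∫ r in t..t', (F (γ r) * enorm2 (deriv γ r) + ω * enorm2 (deriv γ r)) := by
              apply intervalIntegral.integral_mono_on hle ((ii_speed hl _ _).const_mul _)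
                ((ii_energy hF hl _ _).add ((ii_speed hl _ _).const_mul _))
              intro r hr
              rw [← add_mul]
              apply mul_le_mul_of_nonneg_right _ (enorm2_nonneg _)
              apply hFω _ _ (hball _ (hτm _))
              · exact hball _ ⟨(hτm _).1.trans hr.1, hr.2.trans (hτm _).2⟩
              · rw [norm_sub_rev]
                have h3 := hdist t r hr.1
                have h4 := hmono hr.2
                have h5 := hℓd _ _ (hu (Nat.le_succ j))
                have h6 := hδ j
                simp only [Nat.succ_eq_add_one] at h5
                linarith
          _ = degLen F t t' γ + ω * (ℓ t' - ℓ t) := by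
              rw [intervalIntegral.integral_add (ii_energy hF hl _ _)
                ((ii_speed hl _ _).const_mul _), intervalIntegral.integral_const_mul, hsub]
              rfl
      linarith
    refine (Finset.sum_le_sum fun j _ => hterm j).trans ?_
    rw [Finset.sum_range_sub (fun j => degLen F a (τ (u j)) γ + ω * ℓ (τ (u j)))]
    have h1 := degLen_add hF hl a (τ (u N)) b
    have h2 := degLen_nonneg hF0 (hτm (u N)).2 γ
    have h3 := degLen_nonneg hF0 (hτm (u 0)).1 γ
    have h4 : ω * ℓ (τ (u N)) ≤ ω * L := mul_le_mul_of_nonneg_left ((hmono (hτm _).2).trans hL) hω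
    have h5 : 0 ≤ ω * ℓ (τ (u 0)) := mul_nonneg hω (hℓa ▸ hmono (hτm _).1)
    linarith

lemma approx_curves {W : ℝ × ℝ → ℝ} {pm pp : ℝ × ℝ} (hW : TwoWell W pm pp)
    {F : ℝ × ℝ → ℝ} (hF : F = fun p => Real.sqrt (W p)) (p q : ℝ × ℝ) {m : ℝ}
    (hm : IsGLB { x | ∃ a' b' γ', IsCurve a' b' γ' p q ∧ degLen F a' b' γ' = x } m) :
    ∃ L, ∀ η > 0, ∃ a b γ, IsCurve a b γ p q ∧ degLen (fun _ => 1) a b γ ≤ L ∧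
      degLen F a b γ ≤ m + η := by
  have hFc : Continuous F := by
    have := hW.smooth.continuous
    rw [hF]; fun_prop
  have hF0 : ∀ x, 0 ≤ F x := fun x => by rw [hF]; exact Real.sqrt_nonneg _
  obtain ⟨⟨C, hC, hup⟩, c, hc, hlo⟩ := pot_bounds hW
  have h1c : Continuous (fun _ : ℝ × ℝ => (1:ℝ)) := continuous_const
  have hsplit : ∀ ε a b γ, LocallyLipschitz γ →
      degLen (fun x => F x + ε) a b γ = degLen F a b γ + ε * degLen (fun _ => 1) a b γ := by
    intro ε a b γ hl
    simp only [degLen, add_mul]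
    rw [intervalIntegral.integral_add (ii_energy hFc hl _ _) ((ii_speed hl _ _).const_mul _),
      intervalIntegral.integral_const_mul]
    simp
  obtain ⟨γs, hγs⟩ : ∃ γ, IsCurve 0 1 γ p q := by
    refine ⟨fun t => p + t • (q - p), zero_le_one, ?_, by simp, by simp⟩
    have : ContDiff ℝ 1 (fun t : ℝ => p + t • (q - p)) := by fun_prop
    exact this.locallyLipschitz
  have hlen0 : ∀ a b (γ : ℝ → ℝ × ℝ), a ≤ b → 0 ≤ degLen (fun _ => 1) a b γ :=
    fun a b γ h => degLen_nonneg (fun _ => zero_le_one) h γ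
  set K := degLen F 0 1 γs + degLen (fun _ => 1) 0 1 γs + 1 with hK
  have hK0 : 0 ≤ K := by
    have h1 := degLen_nonneg hF0 zero_le_one γs
    have h2 := hlen0 0 1 γs zero_le_one
    linarith
  obtain ⟨L, hL⟩ := length_bound hFc hF0 (p := p) (q := q) hC hc
    (by simpa [hF] using hup) (by simpa [hF] using hlo) K hK0
  refine ⟨L, fun η hη => ?_⟩
  obtain ⟨x, ⟨a0, b0, γ0, hγ0, rfl⟩, -, hx⟩ := hm.exists_between (show m < m + η / 2 by linarith)
  set l0 := degLen (fun _ => 1) a0 b0 γ0 with hl0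
  have hl00 : 0 ≤ l0 := hlen0 _ _ _ hγ0.1
  set ε := min 1 (η / 2 / (l0 + 1)) with hε
  have hεp : 0 < ε := lt_min one_pos (by positivity)
  have hε1 : ε ≤ 1 := min_le_left _ _
  have hεη : ε * (l0 + 1) ≤ η / 2 := by
    have : ε ≤ η / 2 / (l0 + 1) := min_le_right _ _
    rwa [le_div_iff₀ (by positivity)] at this
  set G : ℝ × ℝ → ℝ := fun x => F x + ε with hG
  have hG0 : ∀ x, 0 ≤ G x := fun x => add_nonneg (hF0 x) hεp.le
  set S := { x | ∃ a' b' γ', IsCurve a' b' γ' p q ∧ degLen G a' b' γ' = x } with hS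
  have hSne : S.Nonempty := ⟨_, 0, 1, γs, hγs, rfl⟩
  have hSbd : BddBelow S := by
    refine ⟨0, ?_⟩
    rintro _ ⟨a', b', γ', h, rfl⟩
    exact degLen_nonneg hG0 h.1 _
  have hε2 : 0 < ε ^ 2 := by positivity
  obtain ⟨_, ⟨a, b, γ, hγ, rfl⟩, hlt⟩ := exists_lt_of_csInf_lt hSne
    (show sInf S < sInf S + ε ^ 2 by linarith)
  have hle : ∀ a' b' γ', IsCurve a' b' γ' p q → degLen G a b γ ≤ degLen G a' b' γ' + ε ^ 2 := by
    intro a' b' γ' h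
    have := csInf_le hSbd (show degLen G a' b' γ' ∈ S from ⟨a', b', γ', h, rfl⟩)
    linarith
  refine ⟨a, b, γ, hγ, hL ε hεp hε1 a b γ hγ ?_ (fun γ' h => hle a b γ' h), ?_⟩
  · have h1 := hle 0 1 γs hγs
    have h2 := hsplit ε 0 1 γs hγs.2.1
    have h3 := hlen0 0 1 γs zero_le_one
    rw [← hG] at h2
    change degLen G a b γ ≤ K
    nlinarith
  · have h1 := hle a0 b0 γ0 hγ0
    have h2 := hsplit ε a0 b0 γ0 hγ0.2.1
    have h3 := hsplit ε a b γ hγ.2.1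
    have h4 := hlen0 a b γ hγ.1
    rw [← hG] at h2 h3
    nlinarith [mul_nonneg hεp.le h4]

lemma limit_curve {F : ℝ × ℝ → ℝ} (hF : Continuous F) (hF0 : ∀ x, 0 ≤ F x) (p q : ℝ × ℝ) {m L : ℝ}
    (h : ∀ η > 0, ∃ a b γ, IsCurve a b γ p q ∧ degLen (fun _ => 1) a b γ ≤ L ∧
      degLen F a b γ ≤ m + η) :
    ∃ σ, IsCurve 0 1 σ p q ∧ degLen F 0 1 σ ≤ m := by
  have hseq : ∀ n : ℕ, ∃ a b γ, IsCurve a b γ p q ∧ degLen (fun _ => 1) a b γ ≤ L ∧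
      degLen F a b γ ≤ m + 1 / ((n : ℝ) + 1) := fun n => h _ (by positivity)
  choose a b γ hγ hlen hE using hseq
  have hL0 : 0 ≤ L := (degLen_nonneg (fun _ => zero_le_one) (hγ 0).1 _).trans (hlen 0)
  choose σn hlip h0 h1 hbd hsum using fun n => reparam (hγ n) (hlen n)
  set R := ‖p‖ + L with hR
  have hlim : ∀ s, ∃ y, Tendsto (fun n => σn n s) (hyperfilter ℕ : Filter ℕ) (𝓝 y) := by
    intro s
    obtain ⟨y, -, hy⟩ := (isCompact_closedBall (0 : ℝ × ℝ) R).ultrafilter_le_nhds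
      ((hyperfilter ℕ).map (fun n => σn n s)) (by
        rw [le_principal_iff]
        exact Filter.Eventually.of_forall (f := (hyperfilter ℕ : Filter ℕ))
          fun n => by simpa using hbd n s)
    exact ⟨y, hy⟩
  choose σ hσ using hlim
  have hσlip : ∀ s s', ‖σ s - σ s'‖ ≤ L * |s - s'| := fun s s' =>
    le_of_tendsto' ((hσ s).sub (hσ s')).norm fun n => hlip n s s'
  have hσ0 : σ 0 = p := tendsto_nhds_unique (hσ 0) (by simp [h0])
  have hσ1 : σ 1 = q := tendsto_nhds_unique (hσ 1) (by simp [h1])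
  have hLW : LipschitzWith L.toNNReal σ := LipschitzWith.of_dist_le_mul fun s s' => by
    rw [dist_eq_norm, Real.dist_eq, Real.coe_toNNReal _ hL0]; exact hσlip s s'
  have hll : LocallyLipschitz σ := hLW.locallyLipschitz
  have hσc : Continuous σ := hLW.continuous
  refine ⟨σ, ⟨zero_le_one, hll, hσ0, hσ1⟩, ?_⟩
  -- sums for the limit curve
  have hη : Tendsto (fun n : ℕ => 1 / ((n : ℝ) + 1)) (hyperfilter ℕ : Filter ℕ) (𝓝 0) :=
    tendsto_one_div_add_atTop_nhds_zero_nat.mono_left Nat.hyperfilter_le_atTop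
  have hsumσ : ∀ ω δ : ℝ, 0 ≤ ω →
      (∀ x y, ‖x‖ ≤ R → ‖y‖ ≤ R → ‖x - y‖ ≤ δ → F x ≤ F y + ω) →
      ∀ (u : ℕ → ℝ) (N : ℕ), Monotone u → (∀ j, L * (u (j + 1) - u j) ≤ δ) →
        ∑ j ∈ Finset.range N, F (σ (u j)) * enorm2 (σ (u (j + 1)) - σ (u j)) ≤ m + ω * L := by
    intro ω δ hω hFω u N hu hδ
    have t1 : Tendsto (fun n => ∑ j ∈ Finset.range N,
        F (σn n (u j)) * enorm2 (σn n (u (j + 1)) - σn n (u j))) (hyperfilter ℕ : Filter ℕ)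
        (𝓝 (∑ j ∈ Finset.range N, F (σ (u j)) * enorm2 (σ (u (j + 1)) - σ (u j)))) := by
      apply tendsto_finsetSum
      intro j _
      exact ((hF.tendsto _).comp (hσ _)).mul
        ((continuous_enorm2.tendsto _).comp ((hσ _).sub (hσ _)))
    have t2 : Tendsto (fun n : ℕ => m + 1 / ((n : ℝ) + 1) + ω * L) (hyperfilter ℕ : Filter ℕ)
        (𝓝 (m + 0 + ω * L)) := (hη.const_add m).add_const _
    rw [add_zero] at t2
    refine le_of_tendsto_of_tendsto' t1 t2 fun n => ?_
    have := hsum n F hF hF0 ω δ hω hFω u N hu hδ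
    linarith [hE n]
  -- difference quotients
  set f : ℕ → ℝ → ℝ := fun n t =>
    F (σ t) * (((n : ℝ) + 1) * enorm2 (σ (t + 1 / ((n : ℝ) + 1)) - σ t)) with hf
  have hfc : ∀ n, Continuous (f n) := by
    intro n
    have := continuous_enorm2
    simp only [hf]; fun_prop
  have hDCT : Tendsto (fun n => ∫ t in (0:ℝ)..1, f n t) atTop (𝓝 (degLen F 0 1 σ)) := by
    obtain ⟨B, hB⟩ := isCompact_Icc.exists_bound_of_continuousOn
      ((hF.comp hσc).continuousOn (s := Icc (0:ℝ) 1))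
    have hB0 : 0 ≤ B := (norm_nonneg _).trans (hB 0 (by simp))
    apply intervalIntegral.tendsto_integral_filter_of_dominated_convergence (fun _ => B * (2 * L))
    · exact Eventually.of_forall fun n => (hfc n).aestronglyMeasurable
    · refine Eventually.of_forall fun n => Eventually.of_forall fun t ht => ?_
      have ht' : t ∈ Icc (0:ℝ) 1 := by
        rw [uIoc_of_le zero_le_one] at ht; exact Ioc_subset_Icc_self ht
      simp only [hf]
      rw [norm_mul]
      refine mul_le_mul (hB t ht') ?_ (norm_nonneg _) hB0
      have hn : (0:ℝ) < (n:ℝ) + 1 := by positivity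
      rw [Real.norm_eq_abs, abs_of_nonneg (mul_nonneg hn.le (enorm2_nonneg _))]
      have h2 := enorm2_le (σ (t + 1 / ((n : ℝ) + 1)) - σ t)
      have h3 := hσlip (t + 1 / ((n : ℝ) + 1)) t
      rw [add_sub_cancel_left, abs_of_pos (by positivity)] at h3
      calc ((n:ℝ) + 1) * enorm2 (σ (t + 1 / ((n : ℝ) + 1)) - σ t)
          ≤ ((n:ℝ) + 1) * (2 * (L * (1 / ((n : ℝ) + 1)))) := by gcongr; linarith
        _ = 2 * L := by field_simp
    · simp
    · filter_upwards [hLW.ae_differentiableAt_real] with t ht _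
      have hd := ht.hasDerivAt.tendsto_slope_zero
      have h1 : Tendsto (fun n : ℕ => 1 / ((n : ℝ) + 1)) atTop (𝓝[≠] 0) := by
        apply tendsto_nhdsWithin_of_tendsto_nhds_of_eventually_within _
          tendsto_one_div_add_atTop_nhds_zero_nat
        exact Eventually.of_forall fun n => by
          have : (0:ℝ) < 1 / ((n : ℝ) + 1) := by positivity
          exact this.ne'
      have h2 := (continuous_enorm2.tendsto _).comp (hd.comp h1)
      refine (h2.const_mul (F (σ t))).congr fun n => ?_
      simp only [hf, Function.comp, enorm2_smul]
      rw [one_div, inv_inv, abs_of_pos (by positivity)]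
  have hfint : ∀ ω δ : ℝ, 0 ≤ ω →
      (∀ x y, ‖x‖ ≤ R → ‖y‖ ≤ R → ‖x - y‖ ≤ δ → F x ≤ F y + ω) →
      ∀ n : ℕ, L * (1 / ((n : ℝ) + 1)) ≤ δ → ∫ t in (0:ℝ)..1, f n t ≤ m + ω * L := by
    intro ω δ hω hFω n hn
    set d := 1 / ((n : ℝ) + 1) with hd
    have hdp : 0 < d := by positivity
    have hnd : ((n : ℝ) + 1) * d = 1 := by rw [hd]; field_simp
    have e1 := intervalIntegral.sum_integral_adjacent_intervals (μ := volume) (f := f n)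
      (a := fun k : ℕ => (k : ℝ) * d) (n := n + 1)
      (fun k _ => (hfc n).intervalIntegrable _ _)
    simp only [Nat.cast_zero, zero_mul, Nat.cast_add, Nat.cast_one, hnd] at e1
    rw [← e1]
    have e2 : ∀ k : ℕ, ∫ t in ((k:ℝ) * d)..(((k:ℝ) + 1) * d), f n t =
        ∫ t in (0:ℝ)..d, f n (t + k * d) := by
      intro k
      rw [intervalIntegral.integral_comp_add_right (f n) ((k:ℝ) * d)]
      congr 1 <;> ring
    simp only [e2]
    have hshift : ∀ k : ℕ, IntervalIntegrable (fun t => f n (t + k * d)) volume 0 d := fun k =>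
      ((hfc n).comp (continuous_add_const ((k : ℝ) * d))).intervalIntegrable _ _
    rw [← intervalIntegral.integral_finsetSum (fun k _ => hshift k)]
    have e3 : ∫ t in (0:ℝ)..d, ∑ k ∈ Finset.range (n + 1), f n (t + k * d) ≤
        ∫ _ in (0:ℝ)..d, ((n : ℝ) + 1) * (m + ω * L) := by
      apply intervalIntegral.integral_mono_on hdp.le
      · apply Continuous.intervalIntegrable
        exact continuous_finset_sum _ fun k _ => (hfc n).comp (continuous_add_const _)
      · simp
      · intro t _
        have := hsumσ ω δ hω hFω (fun k => t + k * d) (n + 1) (by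
          intro i j hij
          have : (i:ℝ) ≤ j := by exact_mod_cast hij
          simp only; gcongr) (by
          intro j
          push_cast
          have : t + ((j:ℝ) + 1) * d - (t + j * d) = d := by ring
          rw [this]; exact hn)
        refine le_trans (le_of_eq ?_) (mul_le_mul_of_nonneg_left this (by positivity : (0:ℝ) ≤ (n:ℝ) + 1))
        rw [Finset.mul_sum]
        refine Finset.sum_congr rfl fun k _ => ?_
        have : t + ((k + 1 : ℕ) : ℝ) * d = t + k * d + d := by push_cast; ring
        simp only [hf, this, ← hd]
        ring
    refine e3.trans (le_of_eq ?_)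
    rw [intervalIntegral.integral_const, smul_eq_mul, sub_zero, ← mul_assoc, mul_comm d, hnd,
      one_mul]
  have hω : ∀ ω > 0, degLen F 0 1 σ ≤ m + ω * L := by
    intro ω hω
    have huc := (isCompact_closedBall (0 : ℝ × ℝ) R).uniformContinuousOn_of_continuous
      hF.continuousOn
    rw [Metric.uniformContinuousOn_iff] at huc
    obtain ⟨δ, hδ, hu⟩ := huc ω hω
    have hFω : ∀ x y, ‖x‖ ≤ R → ‖y‖ ≤ R → ‖x - y‖ ≤ δ / 2 → F x ≤ F y + ω := by
      intro x y hx hy hxy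
      have := hu x (by simpa using hx) y (by simpa using hy) (by rw [dist_eq_norm]; linarith)
      rw [Real.dist_eq] at this
      linarith [(abs_lt.1 this).2]
    refine le_of_tendsto hDCT ?_
    have t3 : Tendsto (fun n : ℕ => L * (1 / ((n : ℝ) + 1))) atTop (𝓝 (L * 0)) :=
      tendsto_one_div_add_atTop_nhds_zero_nat.const_mul L
    rw [mul_zero] at t3
    filter_upwards [t3.eventually_le_const (half_pos hδ)] with n hn
    exact hfint ω (δ / 2) hω.le hFω n hn
  apply le_of_forall_pos_le_add
  intro ε hε
  refine (hω (ε / (L + 1)) (by positivity)).trans ?_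
  have : ε / (L + 1) * L ≤ ε := by
    rw [div_mul_eq_mul_div, div_le_iff₀ (by positivity)]; nlinarith
  linarith

/-- for every pair of points `p, q ∈ ℝ²`, the infimum defining the unconstrained
degenerate distance `d̄_F(p,q)` is attained by some locally Lipschitz curve joining `p` to `q`. -/
theorem exists_unconstrained_geodesic
    (W : ℝ × ℝ → ℝ) (pm pp : ℝ × ℝ) (hW : TwoWell W pm pp)
    (F : ℝ × ℝ → ℝ) (hF : F = fun p => Real.sqrt (W p)) (p q : ℝ × ℝ) :
    ∃ a b γ, IsCurve a b γ p q ∧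
      degLen F a b γ =
        sInf { x | ∃ a' b' γ', IsCurve a' b' γ' p q ∧ degLen F a' b' γ' = x } := by
  have hFc : Continuous F := by
    have := hW.smooth.continuous
    rw [hF]; fun_prop
  have hF0 : ∀ x, 0 ≤ F x := fun x => by rw [hF]; exact Real.sqrt_nonneg _
  set S := { x | ∃ a' b' γ', IsCurve a' b' γ' p q ∧ degLen F a' b' γ' = x } with hS
  have hne : S.Nonempty := by
    refine ⟨_, 0, 1, fun t => p + t • (q - p), ⟨zero_le_one, ?_, by simp, by simp⟩, rfl⟩
    have : ContDiff ℝ 1 (fun t : ℝ => p + t • (q - p)) := by fun_prop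
    exact this.locallyLipschitz
  have hbd : BddBelow S := by
    refine ⟨0, ?_⟩
    rintro _ ⟨a', b', γ', h, rfl⟩
    exact degLen_nonneg hF0 h.1 _
  obtain ⟨L, hL⟩ := approx_curves hW hF p q (isGLB_csInf hne hbd)
  obtain ⟨σ, hσ, hle⟩ := limit_curve hFc hF0 p q hL
  exact ⟨0, 1, σ, hσ, le_antisymm hle (csInf_le hbd ⟨0, 1, σ, hσ, rfl⟩)⟩
end
end

section
/- For every A ∈ ℝ, inf{ E(γ) : γ : [a,b] → ℝ² locally Lipschitz, γ(a) = γ(b) = (0,0), 𝒜(γ) = A } = 0. Consequently the associated quantity d_F((0,0,0),(0,0,A)) vanishes for every A, so d_F fails to be a metric on ℝ³ when the conformal factor degenerates faster than linearly at its zero. -/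
open MeasureTheory Set Filter Topology
open scoped ENNReal

noncomputable section

/-- The singular Carnot–Carathéodory distance on `ℝ³` induced by the conformal factor `F`:
the infimum of degenerate lengths of locally Lipschitz planar curves joining the planar
projections of `P` and `Q` whose signed area equals the difference of third coordinates. -/
def dCC (F : ℝ × ℝ → ℝ) (P Q : ℝ × ℝ × ℝ) : ℝ :=
  sInf { x | ∃ a b γ, IsCurve a b γ (P.1, P.2.1) (Q.1, Q.2.1) ∧
      sArea a b γ = Q.2.2 - P.2.2 ∧ degLen F a b γ = x }

/-- A circle through the origin, traversed `N` times. -/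
theorem circ_aux (α : ℝ) (hα : 2 < α) (N r s A : ℝ) (n : ℕ) (hn : N = n)
    (hr : 0 ≤ r) (hs : s ^ 2 = r ^ 2) (hA : -(r * s * Real.pi * N) = A) :
    ∃ a b γ, IsCurve a b γ (0, 0) (0, 0) ∧ sArea a b γ = A ∧
      degLen (fun p => enorm2 p ^ (α / 2)) a b γ
        ≤ ((2 * r) ^ (α / 2) * r) * (N * (2 * Real.pi)) := by
  have hN : 0 ≤ N * (2 * Real.pi) := by rw [hn]; positivity
  have h1 : ∀ t : ℝ, HasDerivAt (fun t => r * (1 - Real.cos t)) (r * Real.sin t) t := by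
    intro t
    have := ((Real.hasDerivAt_cos t).const_sub 1).const_mul r
    simpa using this
  have h2 : ∀ t : ℝ, HasDerivAt (fun t => s * Real.sin t) (s * Real.cos t) t := by
    intro t
    exact (Real.hasDerivAt_sin t).const_mul s
  have hc : Real.cos (N * (2 * Real.pi)) = 1 := by
    rw [hn]; exact Real.cos_nat_mul_two_pi n
  have hsn : Real.sin (N * (2 * Real.pi)) = 0 := by
    have := Real.sin_nat_mul_pi (2 * n)
    rw [← this, hn]; push_cast; ring_nf
  refine ⟨0, N * (2 * Real.pi), fun t => (r * (1 - Real.cos t), s * Real.sin t),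
    ⟨hN, ?_, by simp, by simp [hc, hsn]⟩, ?_, ?_⟩
  · have : ContDiff ℝ 1 (fun t : ℝ => (r * (1 - Real.cos t), s * Real.sin t)) := by fun_prop
    exact this.locallyLipschitz
  · unfold sArea
    simp only [(h2 _).deriv]
    have : ∀ t ∈ uIcc (0:ℝ) (N * (2 * Real.pi)), HasDerivAt
        (fun t => r * s * (Real.sin t - (t + Real.sin t * Real.cos t) / 2))
        (r * (1 - Real.cos t) * (s * Real.cos t)) t := by
      intro t _
      have := ((Real.hasDerivAt_sin t).sub (((hasDerivAt_id t).add
        ((Real.hasDerivAt_sin t).mul (Real.hasDerivAt_cos t))).div_const 2)).const_mul (r * s)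
      refine this.congr_deriv ?_
      linear_combination (r * s / 2) * Real.sin_sq_add_cos_sq t
    rw [intervalIntegral.integral_eq_sub_of_hasDerivAt this
      (Continuous.intervalIntegrable (by fun_prop) _ _)]
    simp only [hc, hsn, Real.sin_zero]
    rw [← hA]; ring
  · unfold degLen
    have hd : ∀ t : ℝ, deriv (fun t : ℝ => (r * (1 - Real.cos t), s * Real.sin t)) t
        = (r * Real.sin t, s * Real.cos t) := fun t => ((h1 t).prodMk (h2 t)).deriv
    have := intervalIntegral.norm_integral_le_of_norm_le_const (a := 0) (b := N * (2 * Real.pi))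
      (C := (2 * r) ^ (α / 2) * r)
      (f := fun t => enorm2 (r * (1 - Real.cos t), s * Real.sin t) ^ (α / 2) *
        enorm2 (deriv (fun t : ℝ => (r * (1 - Real.cos t), s * Real.sin t)) t)) ?_
    · rw [sub_zero, abs_of_nonneg hN] at this
      exact (le_abs_self _).trans this
    · intro t _
      rw [hd]
      have e1 : enorm2 (r * Real.sin t, s * Real.cos t) = r := by
        unfold enorm2
        rw [show (r * Real.sin t, s * Real.cos t).1 ^ 2 + (r * Real.sin t, s * Real.cos t).2 ^ 2
          = r ^ 2 by
            simp only
            linear_combination (Real.cos t) ^ 2 * hs + r ^ 2 * Real.sin_sq_add_cos_sq t]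
        exact Real.sqrt_sq hr
      have e2 : enorm2 (r * (1 - Real.cos t), s * Real.sin t) ≤ 2 * r := by
        unfold enorm2
        refine Real.sqrt_le_iff.2 ⟨by positivity, ?_⟩
        simp only
        have : (r * (1 - Real.cos t)) ^ 2 + (s * Real.sin t) ^ 2
            = 2 * r ^ 2 * (1 - Real.cos t) := by
          linear_combination (Real.sin t) ^ 2 * hs + r ^ 2 * Real.sin_sq_add_cos_sq t
        rw [this]
        nlinarith [Real.neg_one_le_cos t, sq_nonneg r]
      have e3 : 0 ≤ enorm2 (r * (1 - Real.cos t), s * Real.sin t) := Real.sqrt_nonneg _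
      rw [e1, Real.norm_of_nonneg (by positivity)]
      gcongr

theorem inf_aux (α : ℝ) (hα : 2 < α) (A : ℝ) :
    sInf { x | ∃ a b γ, IsCurve a b γ (0, 0) (0, 0) ∧ sArea a b γ = A ∧
        degLen (fun p => enorm2 p ^ (α / 2)) a b γ = x } = 0 := by
  have hnn : ∀ x ∈ { x | ∃ a b γ, IsCurve a b γ (0, 0) (0, 0) ∧ sArea a b γ = A ∧
        degLen (fun p => enorm2 p ^ (α / 2)) a b γ = x }, 0 ≤ x := by
    rintro x ⟨a, b, γ, hc, -, rfl⟩
    refine intervalIntegral.integral_nonneg hc.1 fun t _ => ?_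
    exact mul_nonneg (Real.rpow_nonneg (Real.sqrt_nonneg _) _) (Real.sqrt_nonneg _)
  refine le_antisymm ?_ (Real.sInf_nonneg hnn)
  have hR : Tendsto (fun n : ℕ => Real.sqrt (|A| / Real.pi / ((n : ℝ) + 1))) atTop (𝓝 0) := by
    have h : Tendsto (fun n : ℕ => |A| / Real.pi / ((n : ℝ) + 1)) atTop (𝓝 0) :=
      tendsto_const_nhds.div_atTop
        (tendsto_atTop_add_const_right _ _ tendsto_natCast_atTop_atTop)
    have h' := (Real.continuous_sqrt.tendsto 0).comp h
    rw [Real.sqrt_zero] at h'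
    exact h'
  have hlim : Tendsto (fun n : ℕ => (2 * Real.sqrt (|A| / Real.pi / ((n : ℝ) + 1))) ^ (α / 2 - 1)
      * (4 * |A|)) atTop (𝓝 0) := by
    have h := ((hR.const_mul 2).rpow_const (p := α / 2 - 1) (Or.inr (by linarith))).mul_const
      (4 * |A|)
    rwa [mul_zero, Real.zero_rpow (by linarith), zero_mul] at h
  refine ge_of_tendsto' hlim fun n => ?_
  set r := Real.sqrt (|A| / Real.pi / ((n : ℝ) + 1)) with hr
  have hr0 : 0 ≤ r := Real.sqrt_nonneg _
  have hpi := Real.pi_pos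
  have hr2 : r ^ 2 * Real.pi * ((n : ℝ) + 1) = |A| := by
    rw [hr, Real.sq_sqrt (by positivity)]
    field_simp
  obtain ⟨s, hs, hA⟩ : ∃ s, s ^ 2 = r ^ 2 ∧ -(r * s * Real.pi * ((n : ℝ) + 1)) = A := by
    rcases le_total 0 A with h | h
    · refine ⟨-r, by ring, ?_⟩
      rw [abs_of_nonneg h] at hr2
      linear_combination hr2
    · refine ⟨r, rfl, ?_⟩
      rw [abs_of_nonpos h] at hr2
      linear_combination -hr2
  obtain ⟨a, b, γ, h1, h2, h3⟩ := circ_aux α hα _ r s A (n + 1) (by push_cast; rfl) hr0 hs hA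
  refine (csInf_le ⟨0, fun x hx => hnn x hx⟩ ⟨a, b, γ, h1, h2, rfl⟩).trans (h3.trans (le_of_eq ?_))
  have hsplit : (2 * r) ^ (α / 2) = (2 * r) ^ (α / 2 - 1) * (2 * r) := by
    rw [← Real.rpow_add_one' (by positivity) (by linarith)]
    congr 1; ring
  rw [hsplit, ← hr2]; ring

/-- for the degenerate conformal factor `F(p) = |p|^{α/2}` with `α > 2`, closed
loops at the origin enclosing any prescribed signed area `A` have arbitrarily small degenerate
length, so `d_F((0,0,0),(0,0,A)) = 0` for every `A` and `d_F` fails to be a metric. -/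
theorem degenerate_well_inf_zero (α : ℝ) (hα : 2 < α)
    (F : ℝ × ℝ → ℝ) (hF : F = fun p => enorm2 p ^ (α / 2)) (A : ℝ) :
    sInf { x | ∃ a b γ, IsCurve a b γ (0, 0) (0, 0) ∧ sArea a b γ = A ∧
        degLen F a b γ = x } = 0 ∧
    dCC F (0, 0, 0) (0, 0, A) = 0 := by
  subst hF
  refine ⟨inf_aux α hα A, ?_⟩
  unfold dCC
  simpa using inf_aux α hα A
end
end
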